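/- Let p be a prime and n a positive integer. Inside a fixed algebraic closure of ℚ_p, there are only finitely many intermediate fields K such that K is a finite Galois extension of ℚ_p of degree at most n. -/

import Mathlib

/-!
A subfield `K` of degree at most `n` can be recovered from its intersection with one finite set `A`
that does not depend on `K`.

Elements of norm at most `1` and degree at most `n` are roots of monic polynomials of degree at most
`n` with integral coefficients. These polynomials form a compact space and roots depend continuously
on coefficients, so the elements lie in a compact set. By Krasner's lemma every `x` close enough to
`a` generates a field containing `a`. Compactness therefore gives a finite set `A` such that each of
these elements `x` has some `a ∈ A ∩ k(x)` within a prescribed distance.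

If `k(A ∩ K)` were smaller than `K`, Riesz's lemma would give an integral `x ∈ K` whose distance to
`k(A ∩ K)` is bounded below independently of `K`, contradicting the choice of `A`.
-/

open Polynomial IntermediateField Filter Topology Metric

lemma isCompact_biUnion_of_upperHemicontinuousOn {X Y : Type*} [TopologicalSpace X]
    [TopologicalSpace Y] {s : Set X} {f : X → Set Y} (hs : IsCompact s)
    (hf : UpperHemicontinuousOn f s) (hfc : ∀ x ∈ s, IsCompact (f x)) :
    IsCompact (⋃ x ∈ s, f x) := by
  refine isCompact_of_finite_subcover fun {ι} U hUo hU ↦ ?_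
  refine hs.induction_on (p := fun s' ↦ ∃ t : Finset ι, ⋃ x ∈ s', f x ⊆ ⋃ i ∈ t, U i)
    ⟨∅, by simp⟩ ?_ ?_ ?_
  · rintro s₁ s₂ h ⟨t, ht⟩
    exact ⟨t, (Set.biUnion_subset_biUnion_left h).trans ht⟩
  · classical
    rintro s₁ s₂ ⟨t₁, ht₁⟩ ⟨t₂, ht₂⟩
    refine ⟨t₁ ∪ t₂, ?_⟩
    rw [Set.biUnion_union, Finset.set_biUnion_union]
    exact Set.union_subset_union ht₁ ht₂
  · intro x hx
    obtain ⟨t, ht⟩ := (hfc x hx).elim_finite_subcover U hUo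
      ((Set.subset_biUnion_of_mem hx).trans hU)
    exact ⟨_, hf.forall_isOpen x hx _ (isOpen_biUnion fun i _ ↦ hUo i) ht, t,
      Set.iUnion₂_subset fun _ h ↦ h⟩

section MonicOfFn

variable {R : Type*} {d : ℕ}

open scoped Classical in
/-- The monic polynomial of degree `d` with lower coefficients `u`. It parametrizes monic
polynomials of a given degree by the topological space `Fin d → R`. -/
noncomputable def monicOfFn [Semiring R] (u : Fin d → R) : R[X] :=
  X ^ d + ofFn d u

lemma monic_monicOfFn [Semiring R] (u : Fin d → R) : (monicOfFn u).Monic := by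
  classical
  exact monic_X_pow_add (ofFn_degree_lt u)

lemma natDegree_monicOfFn [Semiring R] [Nontrivial R] (u : Fin d → R) :
    (monicOfFn u).natDegree = d := by
  classical
  refine natDegree_eq_of_degree_eq_some ?_
  rw [monicOfFn, degree_add_eq_left_of_degree_lt, degree_X_pow]
  simpa using ofFn_degree_lt u

lemma monicOfFn_toFn_natDegree [Semiring R] {f : R[X]} (hf : f.Monic) :
    monicOfFn (toFn f.natDegree f) = f := by
  classical
  rw [monicOfFn, ofFn_eq_sum_monomial]
  conv_rhs => rw [hf.as_sum, Finset.sum_range]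
  simp [toFn, C_mul_X_pow_eq_monomial]

lemma norm_coeff_ofFn_le [SeminormedRing R] [DecidableEq R] (u : Fin d → R) (i : ℕ) :
    ‖(ofFn d u).coeff i‖ ≤ ‖u‖ := by
  rcases lt_or_ge i d with hi | hi
  · simpa [ofFn_coeff_eq_val_of_lt u hi] using norm_le_pi_norm u ⟨i, hi⟩
  · simp [ofFn_coeff_eq_zero_of_ge u hi]

lemma norm_coeff_monicOfFn_sub_le [SeminormedRing R] (u v : Fin d → R) (i : ℕ) :
    ‖(monicOfFn u).coeff i - (monicOfFn v).coeff i‖ ≤ ‖u - v‖ := by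
  classical
  simpa [monicOfFn] using norm_coeff_ofFn_le (u - v) i

end MonicOfFn

section ContinuityOfRoots

variable {k L : Type*} [NormedField k] [NormedField L] [NormedAlgebra k L] {d : ℕ}

lemma norm_lt_norm_add_one_of_mem_rootSet_monicOfFn {u : Fin d → k} {x : L}
    (hx : x ∈ (monicOfFn u).rootSet L) : ‖x‖ < ‖u‖ + 1 := by
  classical
  have hmonic : ((monicOfFn u).map (algebraMap k L)).Monic := (monic_monicOfFn u).map _
  have hroot : ((monicOfFn u).map (algebraMap k L)).IsRoot x := by
    simpa using aeval_eq_zero_of_mem_rootSet hx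
  refine (hroot.norm_lt_cauchyBound hmonic.ne_zero).trans_le (?_ : _ ≤ ‖u‖₊ + 1)
  rw [cauchyBound, hmonic.leadingCoeff, nnnorm_one, div_one, natDegree_map, natDegree_monicOfFn]
  gcongr
  refine Finset.sup_le fun i hi ↦ ?_
  have hne : i ≠ d := (Finset.mem_range.1 hi).ne
  rw [coeff_map, nnnorm_algebraMap', ← NNReal.coe_le_coe, coe_nnnorm, coe_nnnorm]
  simpa [monicOfFn, coeff_X_pow, hne] using norm_coeff_ofFn_le u i

lemma upperHemicontinuousAt_rootSet_monicOfFn {v : Fin d → k}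
    (hv : ((monicOfFn v).map (algebraMap k L)).Splits) :
    UpperHemicontinuousAt (fun u : Fin d → k ↦ (monicOfFn u).rootSet L) v := by
  refine UpperHemicontinuousAt.of_forall_isOpen fun U hU hvU ↦ ?_
  -- The exponent `d⁻¹` in the estimate for the roots requires `d ≠ 0`.
  rcases eq_or_ne d 0 with rfl | hd
  · simpa [Subsingleton.elim _ v] using hvU
  obtain ⟨ε, hε, hεU⟩ :=
    (rootSet_finite (monicOfFn v) L).isCompact.exists_thickening_subset_open hU hvU
  have hlim : Tendsto (fun δ : ℝ ↦ ((d + 1) * δ) ^ (d : ℝ)⁻¹ * (‖v‖ + 2)) (𝓝[>] 0) (𝓝 0) := by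
    have hcont : Continuous fun δ : ℝ ↦ ((d + 1) * δ) ^ (d : ℝ)⁻¹ * (‖v‖ + 2) :=
      ((continuous_const.mul continuous_id).rpow_const fun _ ↦ .inr (by positivity)).mul_const _
    refine (hcont.tendsto' 0 0 ?_).mono_left nhdsWithin_le_nhds
    rw [mul_zero, Real.zero_rpow (by positivity), zero_mul]
  obtain ⟨δ, hδε, hδ0, hδ1⟩ :=
    ((hlim.eventually_lt_const hε).and (Ioo_mem_nhdsGT one_pos)).exists
  filter_upwards [ball_mem_nhds v hδ0] with u hu x hx
  obtain ⟨b, hb, hxb⟩ := exists_aroots_norm_sub_lt_of_norm_coeff_sub_lt (g := monicOfFn v) hδ0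
    (aeval_eq_zero_of_mem_rootSet hx) (monic_monicOfFn u) (monic_monicOfFn v)
    (by simp only [natDegree_monicOfFn])
    (fun i ↦ (norm_coeff_monicOfFn_sub_le v u i).trans_lt (mem_ball_iff_norm'.1 hu)) hv
  have hx_max : max ‖x‖ 1 ≤ ‖v‖ + 2 := by
    have hxu := norm_lt_norm_add_one_of_mem_rootSet_monicOfFn hx
    have huv := norm_lt_of_mem_ball hu
    exact max_le (by linarith) (by linarith [norm_nonneg v])
  refine hεU (mem_thickening_iff.2 ⟨b, by simpa [mem_rootSet'] using hb, ?_⟩)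
  rw [natDegree_monicOfFn] at hxb
  rw [dist_eq_norm]
  calc
    ‖x - b‖ < ((d + 1) * δ) ^ (d : ℝ)⁻¹ * max ‖x‖ 1 := hxb
    _ ≤ ((d + 1) * δ) ^ (d : ℝ)⁻¹ * (‖v‖ + 2) := by gcongr
    _ < ε := hδε

variable (L) in
lemma isCompact_biUnion_rootSet_monicOfFn [IsAlgClosed L] {s : Set (Fin d → k)}
    (hs : IsCompact s) : IsCompact (⋃ u ∈ s, (monicOfFn u).rootSet L) :=
  isCompact_biUnion_of_upperHemicontinuousOn hs
    (fun _ _ ↦ (upperHemicontinuousAt_rootSet_monicOfFn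
      (IsAlgClosed.splits _)).upperHemicontinuousWithinAt _)
    fun _ _ ↦ (rootSet_finite _ L).isCompact

end ContinuityOfRoots

-- Scaling Riesz's lemma by `c⁻²` makes the lower bound depend on `c` alone.
lemma exists_mem_norm_le_one_forall_le_norm_sub {k E : Type*} [NormedField k]
    [NormedAddCommGroup E] [NormedSpace k E] {c : k} (hc : 1 < ‖c‖) {V W : Submodule k E}
    (hV : IsClosed (V : Set E)) (hVW : V < W) :
    ∃ x ∈ W, ‖x‖ ≤ 1 ∧ ∀ y ∈ V, (‖c‖ ^ 2)⁻¹ ≤ ‖x - y‖ := by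
  have hc0 : c ^ 2 ≠ 0 := pow_ne_zero 2 (norm_pos_iff.1 (one_pos.trans hc))
  obtain ⟨z, hzW, hzV⟩ := SetLike.exists_of_lt hVW
  have hVcomap : IsClosed (V.comap W.subtype : Set W) := hV.preimage continuous_subtype_val
  obtain ⟨x, hx, hxV⟩ :=
    riesz_lemma_of_norm_lt hc (lt_self_pow₀ hc one_lt_two) hVcomap ⟨⟨z, hzW⟩, hzV⟩
  refine ⟨(c ^ 2)⁻¹ • (x : E), W.smul_mem _ x.2, ?_, fun y hy ↦ ?_⟩
  · rw [norm_smul, norm_inv, norm_pow]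
    exact inv_mul_le_one_of_le₀ hx (by positivity)
  · have hy' : c ^ 2 • y ∈ V := V.smul_mem _ hy
    have hxy : 1 ≤ ‖(x : E) - c ^ 2 • y‖ := hxV ⟨c ^ 2 • y, hVW.le hy'⟩ hy'
    calc
      (‖c‖ ^ 2)⁻¹ ≤ (‖c‖ ^ 2)⁻¹ * ‖(x : E) - c ^ 2 • y‖ :=
        le_mul_of_one_le_right (by positivity) hxy
      _ = ‖(c ^ 2)⁻¹ • (x : E) - y‖ := by
        rw [← norm_pow, ← norm_inv, ← norm_smul, smul_sub, inv_smul_smul₀ hc0]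

lemma eventually_mem_adjoin_simple {k L : Type*} [Field k] [NormedField L] [Algebra k L]
    [Algebra.IsAlgebraic k L] [IsKrasner k L] {a : L} (ha : IsSeparable k a)
    (hsplits : ((minpoly k a).map (algebraMap k L)).Splits) : ∀ᶠ x in 𝓝 a, a ∈ k⟮x⟯ := by
  have hfar : ∀ᶠ x in 𝓝 a, ∀ b ∈ (minpoly k a).rootSet L \ {a}, ‖a - x‖ < ‖a - b‖ := by
    refine ((rootSet_finite _ L).sdiff).eventually_all.2 fun b hb ↦ ?_
    have hab : 0 < ‖a - b‖ := norm_sub_pos_iff.2 (Ne.symm hb.2)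
    filter_upwards [ball_mem_nhds a hab] with x hx using mem_ball_iff_norm'.1 hx
  filter_upwards [hfar] with x hx
  exact IsKrasner.krasner ha hsplits (Algebra.IsIntegral.isIntegral x) fun b hb hab ↦
    hx b ⟨(isConjRoot_iff_mem_minpoly_rootSet ha.isIntegral).1 hb, hab.symm⟩

section BoundedDegree

variable {k L : Type*} [NontriviallyNormedField k] [IsUltrametricDist k]
  [NormedField L] [NormedAlgebra k L] [Algebra.IsAlgebraic k L]

lemma norm_coeff_minpoly_le_one [CompleteSpace k] {x : L} (hx : ‖x‖ ≤ 1) (i : ℕ) :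
    ‖(minpoly k x).coeff i‖ ≤ 1 := by
  rw [NormedAlgebra.norm_eq_spectralNorm k] at hx
  exact (spectralValue_le_one_iff (minpoly.monic (Algebra.IsIntegral.isIntegral x))).1 hx i

variable [ProperSpace k] [IsAlgClosed L]

variable (k L) in
lemma exists_isCompact_forall_norm_le_one_mem (n : ℕ) :
    ∃ s : Set L, IsCompact s ∧ ∀ x : L, ‖x‖ ≤ 1 → (minpoly k x).natDegree ≤ n → x ∈ s := by
  refine ⟨⋃ d ∈ Finset.range (n + 1), ⋃ u ∈ closedBall (0 : Fin d → k) 1, (monicOfFn u).rootSet L,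
    (Finset.range (n + 1)).isCompact_biUnion fun d _ ↦
      isCompact_biUnion_rootSet_monicOfFn L (isCompact_closedBall _ _), fun x hx hxn ↦ ?_⟩
  have hmonic := minpoly.monic (Algebra.IsIntegral.isIntegral (R := k) x)
  have hu : toFn (minpoly k x).natDegree (minpoly k x) ∈ closedBall 0 1 := by
    rw [mem_closedBall_zero_iff, pi_norm_le_iff_of_nonneg zero_le_one]
    exact fun i ↦ norm_coeff_minpoly_le_one hx i
  refine Set.mem_biUnion (Finset.mem_coe.2 (Finset.mem_range_succ_iff.2 hxn))
    (Set.mem_biUnion hu ?_)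
  rw [monicOfFn_toFn_natDegree hmonic]
  exact mem_rootSet.2 ⟨hmonic.ne_zero, minpoly.aeval k x⟩

variable [PerfectField k]

variable (k L) in
lemma exists_finite_forall_exists_mem_adjoin_simple (n : ℕ) {r : ℝ} (hr : 0 < r) :
    ∃ A : Set L, A.Finite ∧ ∀ x : L, ‖x‖ ≤ 1 → (minpoly k x).natDegree ≤ n →
      ∃ a ∈ A, a ∈ k⟮x⟯ ∧ ‖x - a‖ < r := by
  obtain ⟨s, hs, hxs⟩ := exists_isCompact_forall_norm_le_one_mem k L n
  have hnhds : ∀ a ∈ s, {x : L | a ∈ k⟮x⟯ ∧ ‖x - a‖ < r} ∈ 𝓝 a := fun a _ ↦ by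
    filter_upwards [eventually_mem_adjoin_simple (Algebra.IsSeparable.isSeparable k a)
      (IsAlgClosed.splits _), ball_mem_nhds a hr] with x hax hx
    exact ⟨hax, mem_ball_iff_norm.1 hx⟩
  obtain ⟨A, -, hsA⟩ := hs.elim_nhds_subcover _ hnhds
  refine ⟨A, A.finite_toSet, fun x hx hxn ↦ ?_⟩
  obtain ⟨a, haA, hax⟩ := Set.mem_iUnion₂.1 (hsA (hxs x hx hxn))
  exact ⟨a, haA, hax⟩

variable (k L) in
lemma exists_finite_forall_adjoin_inter_eq (n : ℕ) :
    ∃ A : Set L, A.Finite ∧ ∀ K : IntermediateField k L, FiniteDimensional k K →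
      Module.finrank k K ≤ n → adjoin k (A ∩ K) = K := by
  obtain ⟨c, hc⟩ := NormedField.exists_one_lt_norm k
  obtain ⟨A, hA, hAx⟩ := exists_finite_forall_exists_mem_adjoin_simple k L n
    (r := (‖c‖ ^ 2)⁻¹) (by positivity)
  refine ⟨A, hA, fun K hK hKn ↦ ?_⟩
  have hle : adjoin k (A ∩ K) ≤ K := adjoin_le_iff.2 Set.inter_subset_right
  by_contra hne
  have : FiniteDimensional k (adjoin k (A ∩ K)).toSubmodule :=
    Submodule.finiteDimensional_of_le (S₂ := K.toSubmodule) hle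
  obtain ⟨x, hxK, hx, hxA⟩ := exists_mem_norm_le_one_forall_le_norm_sub hc
    (V := (adjoin k (A ∩ K)).toSubmodule) (W := K.toSubmodule)
    (Submodule.closed_of_finiteDimensional _) (hle.lt_of_ne hne)
  have hxn : (minpoly k x).natDegree ≤ n := by
    rw [← minpoly_eq (⟨x, hxK⟩ : K)]
    exact (minpoly.natDegree_le _).trans hKn
  obtain ⟨a, haA, hax, hxa⟩ := hAx x hx hxn
  have haK : a ∈ K := adjoin_simple_le_iff.2 hxK hax
  exact (hxA a (subset_adjoin k _ ⟨haA, haK⟩)).not_gt hxa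

end BoundedDegree

theorem finite_galois_extensions_of_padic_of_bounded_degree_general
    (k L : Type*) [NontriviallyNormedField k] [IsUltrametricDist k] [ProperSpace k]
    [PerfectField k] [Field L] [Algebra k L] [IsAlgClosed L] [Algebra.IsAlgebraic k L] (n : ℕ) :
    {K : IntermediateField k L | FiniteDimensional k K ∧ Module.finrank k K ≤ n}.Finite := by
  let : NormedField L := spectralNorm.normedField k L
  let : NormedAlgebra k L := spectralNorm.normedAlgebra k L
  obtain ⟨A, hA, hAK⟩ := exists_finite_forall_adjoin_inter_eq k L n
  refine (hA.finite_subsets.image (adjoin k)).subset ?_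
  rintro K ⟨hK, hKn⟩
  exact ⟨A ∩ K, Set.inter_subset_left, hAK K hK hKn⟩

/-- Let `p` be a prime and `n` a positive integer.  Inside a fixed algebraic closure of
`ℚ_p`, there are only finitely many intermediate fields `K` that are finite Galois
extensions of `ℚ_p` of degree at most `n`. -/
theorem finite_galois_extensions_of_padic_of_bounded_degree
    (p : ℕ) [Fact p.Prime] (n : ℕ) (hn : 0 < n) :
    {K : IntermediateField ℚ_[p] (AlgebraicClosure ℚ_[p]) |
      FiniteDimensional ℚ_[p] K ∧ IsGalois ℚ_[p] K ∧
        Module.finrank ℚ_[p] K ≤ n}.Finite :=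
  (finite_galois_extensions_of_padic_of_bounded_degree_general ℚ_[p] _ n).subset
    fun _ hK ↦ ⟨hK.1, hK.2.2⟩
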